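/- arXiv:math/0301057 — 6 statements merged into one kernel-verified Lean document; each statement's English description precedes it below -/
import Mathlib

section
/- Let l be a nonempty list of Booleans, read cyclically (entry i is followed by entry (i+1) mod (length of l)). If the number of entries equal to true is strictly greater than the number of entries equal to false, then there exists an index i such that both the entry at position i and the entry at position (i+1) mod (length l) are true. (This is the combinatorial fact that a turn pattern with more left turns than right turns contains two consecutive left turns, hence an exposed path of length 3.) -/
/-!
Rotating a cyclic pattern by `k` places permutes its positions. So if the entries satisfying `p` and
those satisfying `q` together outnumber the positions, the positions whose entry satisfies `p` and
the positions whose entry `k` places further on satisfies `q` must overlap, by the pigeonhole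
principle. For consecutive left turns take `k = 1` and let both `p` and `q` select the left turns.
-/

variable {α β : Type*}

theorem countP_or_add_countP_and (p q : α → Bool) (l : List α) :
    l.countP (fun a ↦ p a || q a) + l.countP (fun a ↦ p a && q a) = l.countP p + l.countP q := by
  induction l with
  | nil => rfl
  | cons a l ih =>
    simp only [List.countP_cons]
    grind

theorem exists_mem_of_length_lt_countP_add_countP {p q : α → Bool} {l : List α}
    (h : l.length < l.countP p + l.countP q) : ∃ a ∈ l, p a ∧ q a := by
  have hor : l.countP (fun a ↦ p a || q a) ≤ l.length := List.countP_le_length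
  have hand : 0 < l.countP (fun a ↦ p a && q a) := by
    have := countP_or_add_countP_and p q l
    lia
  simpa only [List.countP_pos_iff, Bool.and_eq_true] using hand

theorem exists_getElem_of_length_lt_countP_add_countP {p : α → Bool} {q : β → Bool}
    {l₁ : List α} {l₂ : List β} (hlen : l₁.length = l₂.length)
    (h : l₁.length < l₁.countP p + l₂.countP q) :
    ∃ i, ∃ (h₁ : i < l₁.length) (h₂ : i < l₂.length), p l₁[i] ∧ q l₂[i] := by
  have hzip : (l₁.zip l₂).length = l₁.length := by simp [hlen]
  have hfst : (l₁.zip l₂).countP (p ∘ Prod.fst) = l₁.countP p := by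
    rw [← List.countP_map, List.map_fst_zip hlen.le]
  have hsnd : (l₁.zip l₂).countP (q ∘ Prod.snd) = l₂.countP q := by
    rw [← List.countP_map, List.map_snd_zip hlen.ge]
  rw [← hzip, ← hfst, ← hsnd] at h
  obtain ⟨ab, hab, hp, hq⟩ := exists_mem_of_length_lt_countP_add_countP h
  obtain ⟨i, hi, rfl⟩ := List.mem_iff_getElem.1 hab
  rw [Function.comp_apply, List.getElem_zip] at hp hq
  exact ⟨i, _, _, hp, hq⟩

theorem more_lefts_gives_consecutive_lefts_general {p q : α → Bool} {l : List α} (k : ℕ)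
    (h : l.length < l.countP p + l.countP q) :
    ∃ i, ∃ hi : i < l.length,
      p l[i] ∧ q (l[(i + k) % l.length]'(Nat.mod_lt _ (Nat.zero_lt_of_lt hi))) := by
  rw [← (l.rotate_perm k).countP_eq q] at h
  obtain ⟨i, hi, hrot, hp, hq⟩ :=
    exists_getElem_of_length_lt_countP_add_countP (l.length_rotate k).symm h
  rw [List.getElem_rotate] at hq
  exact ⟨i, hi, hp, hq⟩

/-- A cyclic turn pattern with strictly more left turns (`true`) than right
turns (`false`) contains two cyclically consecutive left turns. -/
theorem more_lefts_gives_consecutive_lefts (l : List Bool) (hl : l ≠ [])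
    (h : l.count false < l.count true) :
    ∃ i, i < l.length ∧ l.getD i false = true ∧
      l.getD ((i + 1) % l.length) false = true := by
  obtain ⟨i, hi, hleft, hnext⟩ := more_lefts_gives_consecutive_lefts_general (p := (· == true))
    (q := (· == true)) 1 (l.count_true_add_count_false ▸ Nat.add_lt_add_left h _)
  exact ⟨i, hi, by grind, by grind⟩
end

section
/- There exist points A, B, C, D in three-dimensional Euclidean space (EuclideanSpace ℝ (Fin 3)) that are affinely independent and satisfy dist A B = 2, dist C D = √3, and dist A C = dist A D = dist B C = dist B D = √3. (This is the existence of the 'mixed' tetrahedron: the unique Euclidean tetrahedron with one edge of length 2 and five edges of length √3, used to metrize tetrahedra containing exactly one edge of degree 5 in a 5/6*-triangulation.) -/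
/-!
Put the midpoints of two opposite edges on an axis, with the edges orthogonal to the axis and to
each other. Reflecting either edge in its midpoint shows that the four remaining edges are equal,
and sliding one edge along the axis gives them any length greater than the one they have when the
midpoints coincide.
-/

theorem exists_pairwise_orthogonal_norm_eq {𝕜 V : Type*} [RCLike 𝕜] [NormedAddCommGroup V]
    [InnerProductSpace 𝕜 V] {n : ℕ} (hn : n ≤ Module.rank 𝕜 V) {r : Fin n → ℝ}
    (hr : ∀ i, 0 ≤ r i) :
    ∃ v : Fin n → V, (Pairwise fun i j ↦ inner 𝕜 (v i) (v j) = 0) ∧ ∀ i, ‖v i‖ = r i := by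
  obtain ⟨f, hf⟩ := Module.le_rank_iff.mp hn
  have he := InnerProductSpace.gramSchmidtNormed_orthonormal hf
  refine ⟨fun i ↦ (r i : 𝕜) • InnerProductSpace.gramSchmidtNormed 𝕜 f i, fun i j hij ↦ ?_,
    fun i ↦ ?_⟩
  · simp only [inner_smul_left, inner_smul_right, he.inner_eq_zero hij, mul_zero]
  · rw [norm_smul, he.norm_eq_one, mul_one, RCLike.norm_of_nonneg (hr i)]

theorem affineIndependent_endpoints_of_linearIndependent {k V P : Type*} [Ring k] [NoZeroDivisors k]
    [NeZero (2 : k)] [AddCommGroup V] [Module k V] [AddTorsor V P] {v : Fin 3 → V}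
    (hv : LinearIndependent k v) (p : P) :
    AffineIndependent k ![v 0 +ᵥ p, -v 0 +ᵥ p, (v 2 + v 1) +ᵥ p, (v 2 - v 1) +ᵥ p] := by
  have eq_zero_of_double {x : k} (hx : x + x = 0) : x = 0 := by
    rw [← two_mul] at hx
    exact (mul_eq_zero.mp hx).resolve_left two_ne_zero
  rw [affineIndependent_iff_of_fintype]
  intro c hsum hvsub
  rw [Finset.univ.weightedVSub_eq_weightedVSubOfPoint_of_sum_eq_zero c _ hsum p] at hvsub
  have hcomb : ∑ i, ![c 0 - c 1, c 2 - c 3, c 2 + c 3] i • v i = 0 := by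
    rw [← hvsub]
    simp only [Finset.weightedVSubOfPoint_apply, Fin.sum_univ_three, Fin.sum_univ_four,
      Matrix.cons_val, vadd_vsub, add_smul, sub_smul, smul_add, smul_sub, smul_neg]
    abel
  have hcoeff := Fintype.linearIndependent_iff.mp hv _ hcomb
  have h01_sub : c 0 - c 1 = 0 := hcoeff 0
  have h23_sub : c 2 - c 3 = 0 := hcoeff 1
  have h23_add : c 2 + c 3 = 0 := hcoeff 2
  rw [Fin.sum_univ_four] at hsum
  have hc2 : c 2 = 0 := eq_zero_of_double (by grind)
  have hc0 : c 0 = 0 := eq_zero_of_double (by grind)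
  intro i
  fin_cases i <;> grind

theorem dist_add_vadd_sub_vadd {V P : Type*} [SeminormedAddCommGroup V] [NormedSpace ℝ V]
    [PseudoMetricSpace P] [NormedAddTorsor V P] (v w : V) (p : P) :
    dist ((w + v) +ᵥ p) ((w - v) +ᵥ p) = 2 * ‖v‖ := by
  rw [dist_vadd_cancel_right, dist_eq_norm, add_sub_sub_cancel, ← two_smul ℝ, norm_smul,
    Real.norm_two]

open scoped RealInnerProductSpace in
theorem dist_vadd_add_vadd_sq_of_inner_eq_zero {V P : Type*} [SeminormedAddCommGroup V]
    [InnerProductSpace ℝ V] [PseudoMetricSpace P] [NormedAddTorsor V P] {u v w : V}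
    (huv : ⟪u, v⟫ = 0) (huw : ⟪u, w⟫ = 0) (hwv : ⟪w, v⟫ = 0) (p : P) :
    dist (u +ᵥ p) ((w + v) +ᵥ p) ^ 2 = ‖u‖ ^ 2 + ‖v‖ ^ 2 + ‖w‖ ^ 2 := by
  rw [dist_vadd_cancel_right, dist_eq_norm, norm_sub_sq_real, norm_add_sq_real, inner_add_right,
    huv, huw, hwv]
  ring

theorem mixed_tetrahedron_exists_general {V P : Type*} [NormedAddCommGroup V]
    [InnerProductSpace ℝ V] [PseudoMetricSpace P] [NormedAddTorsor V P]
    (hV : 3 ≤ Module.rank ℝ V) {a b c : ℝ} (ha : 0 < a) (hb : 0 ≤ b) (hc : 0 < c)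
    (habc : a ^ 2 + c ^ 2 < (2 * b) ^ 2) :
    ∃ A B C D : P,
      AffineIndependent ℝ ![A, B, C, D] ∧
      dist A B = a ∧ dist C D = c ∧
      dist A C = b ∧ dist A D = b ∧
      dist B C = b ∧ dist B D = b := by
  obtain ⟨h, hh, hsq⟩ : ∃ h > 0, (a / 2) ^ 2 + (c / 2) ^ 2 + h ^ 2 = b ^ 2 := by
    have hpos : 0 < b ^ 2 - (a / 2) ^ 2 - (c / 2) ^ 2 := by linarith
    exact ⟨√_, Real.sqrt_pos.mpr hpos, by rw [Real.sq_sqrt hpos.le]; ring⟩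
  have hr : ∀ i, 0 < ![a / 2, c / 2, h] i := by simp [Fin.forall_fin_succ, ha, hc, hh]
  obtain ⟨v, horth, hnorm⟩ := exists_pairwise_orthogonal_norm_eq hV fun i ↦ (hr i).le
  have hv : LinearIndependent ℝ v := linearIndependent_of_ne_zero_of_inner_eq_zero
    (fun i ↦ norm_pos_iff.mp (hnorm i ▸ hr i)) horth
  have norm0 : ‖v 0‖ = a / 2 := hnorm 0
  have norm1 : ‖v 1‖ = c / 2 := hnorm 1
  have norm2 : ‖v 2‖ = h := hnorm 2
  have orth01 := horth (show (0 : Fin 3) ≠ 1 by decide)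
  have orth02 := horth (show (0 : Fin 3) ≠ 2 by decide)
  have orth21 := horth (show (2 : Fin 3) ≠ 1 by decide)
  obtain ⟨p⟩ : Nonempty P := inferInstance
  have lateral {x y : V} (hx : x = v 0 ∨ x = -v 0) (hy : y = v 1 ∨ y = -v 1) :
      dist (x +ᵥ p) ((v 2 + y) +ᵥ p) = b := by
    rw [← sq_eq_sq₀ dist_nonneg hb, ← hsq, ← norm0, ← norm1, ← norm2]
    rcases hx with rfl | rfl <;> rcases hy with rfl | rfl <;>
      rw [dist_vadd_add_vadd_sq_of_inner_eq_zero] <;> simp [orth01, orth02, orth21]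
  refine ⟨_, _, _, _, affineIndependent_endpoints_of_linearIndependent hv p,
    ?_, ?_, ?_, ?_, ?_, ?_⟩
  · simpa [norm0, mul_div_cancel₀] using dist_add_vadd_sub_vadd (v 0) 0 p
  · rw [dist_add_vadd_sub_vadd, norm1, mul_div_cancel₀ _ two_ne_zero]
  all_goals simp [sub_eq_add_neg, lateral]

/-- Existence of the mixed tetrahedron: the Euclidean tetrahedron with one edge
of length 2 and five edges of length √3. -/
theorem mixed_tetrahedron_exists :
    ∃ A B C D : EuclideanSpace ℝ (Fin 3),
      AffineIndependent ℝ ![A, B, C, D] ∧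
      dist A B = 2 ∧ dist C D = Real.sqrt 3 ∧
      dist A C = Real.sqrt 3 ∧ dist A D = Real.sqrt 3 ∧
      dist B C = Real.sqrt 3 ∧ dist B D = Real.sqrt 3 := by
  have hrank : 3 ≤ Module.rank ℝ (EuclideanSpace ℝ (Fin 3)) := by simp [← Module.finrank_eq_rank]
  exact mixed_tetrahedron_exists_general hrank two_pos (Real.sqrt_nonneg 3)
    (by positivity) (by norm_num [mul_pow])
end

section
/- Let A, B, C, D be points in EuclideanSpace ℝ (Fin 3) with dist A B = 2 and dist A C = dist A D = dist B C = dist B D = dist C D = √3 (the mixed tetrahedron), and let M be the midpoint of A and B. Then the angle ∠ C M D equals arccos(1/4). (Since C and D are equidistant from A and B, the vectors C − M and D − M are perpendicular to the edge AB, so ∠ C M D is the dihedral angle of the mixed tetrahedron along its unique edge of length 2, i.e. along the degree-5 edge.) -/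
/-!
The medians from `C` and `D` to the midpoint `M` of `AB` have squared length `3 - 1 = 2` by
Apollonius' theorem. The law of cosines in the triangle `CMD`, with sides `√2`, `√2`, `√3`, then
gives the cosine `(2 + 2 - 3) / (2 * 2) = 1 / 4`.
-/

open EuclideanGeometry

section EuclideanAffineSpace

variable {V P : Type*} [NormedAddCommGroup V] [InnerProductSpace ℝ V] [MetricSpace P]
  [NormedAddTorsor V P]

theorem angle_eq_arccos_dist (p₁ p₂ p₃ : P) :
    ∠ p₁ p₂ p₃ = Real.arccos
      ((dist p₁ p₂ ^ 2 + dist p₃ p₂ ^ 2 - dist p₁ p₃ ^ 2) / (2 * (dist p₁ p₂ * dist p₃ p₂))) := by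
  rw [EuclideanGeometry.angle, InnerProductGeometry.angle,
    real_inner_eq_norm_mul_self_add_norm_mul_self_sub_norm_sub_mul_self_div_two,
    vsub_sub_vsub_cancel_right, div_div]
  simp only [dist_eq_norm_vsub V, sq]

theorem dist_midpoint_sq_of_dist_eq {a b c : P} {l : ℝ} (hac : dist a c = l) (hbc : dist b c = l) :
    dist c (midpoint ℝ a b) ^ 2 = l ^ 2 - (dist a b / 2) ^ 2 := by
  have apollonius := dist_sq_add_dist_sq_eq_two_mul_dist_midpoint_sq_add_half_dist_sq c a b
  rw [dist_comm c a, dist_comm c b, hac, hbc] at apollonius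
  linarith

/- In the flat case `2 * l = dist a b` the points `c`, `d` and the midpoint coincide; both sides
are then `π / 2`, by the conventions for angles with a zero vector and for division by zero. -/
theorem angle_midpoint_eq_arccos_of_dist_eq {a b c d : P} {l : ℝ}
    (hac : dist a c = l) (had : dist a d = l) (hbc : dist b c = l) (hbd : dist b d = l) :
    ∠ c (midpoint ℝ a b) d = Real.arccos
      ((4 * l ^ 2 - dist a b ^ 2 - 2 * dist c d ^ 2) / (4 * l ^ 2 - dist a b ^ 2)) := by
  have median_c := dist_midpoint_sq_of_dist_eq hac hbc
  have median_d := dist_midpoint_sq_of_dist_eq had hbd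
  have medians_eq : dist d (midpoint ℝ a b) = dist c (midpoint ℝ a b) :=
    (sq_eq_sq₀ dist_nonneg dist_nonneg).mp (median_d.trans median_c.symm)
  rw [angle_eq_arccos_dist, medians_eq, ← sq, median_c,
    ← mul_div_mul_left _ (2 * (l ^ 2 - (dist a b / 2) ^ 2)) (two_ne_zero' ℝ)]
  ring_nf

theorem mixed_tetrahedron_dihedral_angle_long_edge_general {A B C D : P}
    (hAB : dist A B = 2) (hAC : dist A C = √3) (hAD : dist A D = √3)
    (hBC : dist B C = √3) (hBD : dist B D = √3) (hCD : dist C D = √3) :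
    ∠ C (midpoint ℝ A B) D = Real.arccos (1 / 4) := by
  rw [angle_midpoint_eq_arccos_of_dist_eq hAC hAD hBC hBD, hAB, hCD, Real.sq_sqrt zero_le_three]
  norm_num

end EuclideanAffineSpace

/-- The dihedral angle of the mixed tetrahedron along its unique edge of
length 2 (the degree-5 edge) is arccos(1/4). -/
theorem mixed_tetrahedron_dihedral_angle_long_edge
    (A B C D : EuclideanSpace ℝ (Fin 3))
    (hAB : dist A B = 2) (hAC : dist A C = Real.sqrt 3)
    (hAD : dist A D = Real.sqrt 3) (hBC : dist B C = Real.sqrt 3)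
    (hBD : dist B D = Real.sqrt 3) (hCD : dist C D = Real.sqrt 3) :
    EuclideanGeometry.angle C (midpoint ℝ A B) D = Real.arccos (1 / 4) :=
  mixed_tetrahedron_dihedral_angle_long_edge_general hAB hAC hAD hBC hBD hCD
end

section
/- Let A, B, C, D be points in EuclideanSpace ℝ (Fin 3) with dist A B = 2 and dist A C = dist A D = dist B C = dist B D = dist C D = √3 (the mixed tetrahedron), and let N be the midpoint of C and D. Then the angle ∠ A N B equals arccos(1/9), and moreover π/3 < arccos(1/9) < π/2. (Since A and B are equidistant from C and D, the vectors A − N and B − N are perpendicular to the edge CD, so ∠ A N B is the dihedral angle of the mixed tetrahedron along the degree-6 edge CD opposite to its long edge; this angle lies strictly between π/3 and π/2.) -/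
/-!
By Apollonius's theorem `A` and `B` have the same distance `3 / 2` to the midpoint `N` of `CD`.
The law of cosines in the isosceles triangle `ANB`, whose base `AB` has length `2`, then gives
`cos ∠ A N B = 1 / 9`, which lies strictly between `cos (π / 2) = 0` and `cos (π / 3) = 1 / 2`.
-/

open Real EuclideanGeometry

theorem arccos_one_half : arccos (1 / 2) = π / 3 :=
  arccos_eq_of_eq_cos (by positivity) (by linarith [pi_pos]) cos_pi_div_three.symm

theorem pi_div_three_lt_arccos {x : ℝ} : π / 3 < arccos x ↔ x < 1 / 2 := by
  rw [← arccos_one_half]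
  refine ⟨antitone_arccos.reflect_lt, fun hx ↦ ?_⟩
  have hle : max x 0 < 1 / 2 := max_lt hx one_half_pos
  calc
    arccos (1 / 2) < arccos (max x 0) :=
      arccos_lt_arccos (by linarith [le_max_right x 0]) hle (by norm_num)
    _ ≤ arccos x := arccos_le_arccos (le_max_left x 0)

section Tetrahedron

variable {V P : Type*} [NormedAddCommGroup V] [InnerProductSpace ℝ V] [MetricSpace P]
  [NormedAddTorsor V P]

theorem dist_midpoint_sq (a b c : P) :
    dist a (midpoint ℝ b c) ^ 2 = (dist a b ^ 2 + dist a c ^ 2) / 2 - dist b c ^ 2 / 4 := by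
  linarith [dist_sq_add_dist_sq_eq_two_mul_dist_midpoint_sq_add_half_dist_sq a b c]

theorem angle_eq_arccos_of_dist_eq {a b p : P} (h : dist a p = dist b p) (hap : a ≠ p) :
    ∠ a p b = arccos (1 - dist a b ^ 2 / (2 * dist a p ^ 2)) := by
  have hp : dist a p ≠ 0 := dist_ne_zero.mpr hap
  have hcos : 1 - dist a b ^ 2 / (2 * dist a p ^ 2) = cos (∠ a p b) := by
    have hlaw := law_cos a p b
    rw [← h] at hlaw
    field_simp
    linarith
  exact (arccos_eq_of_eq_cos (angle_nonneg a p b) (angle_le_pi a p b) hcos).symm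

theorem angle_midpoint_eq_arccos {a b c d : P} {r : ℝ} (hac : dist a c = r) (had : dist a d = r)
    (hbc : dist b c = r) (hbd : dist b d = r) (hcd : dist c d < 2 * r) :
    ∠ a (midpoint ℝ c d) b = arccos (1 - 2 * dist a b ^ 2 / (4 * r ^ 2 - dist c d ^ 2)) := by
  have ha : dist a (midpoint ℝ c d) ^ 2 = (4 * r ^ 2 - dist c d ^ 2) / 4 := by
    rw [dist_midpoint_sq, hac, had]
    ring
  have hb : dist b (midpoint ℝ c d) ^ 2 = (4 * r ^ 2 - dist c d ^ 2) / 4 := by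
    rw [dist_midpoint_sq, hbc, hbd]
    ring
  have hab : dist a (midpoint ℝ c d) = dist b (midpoint ℝ c d) :=
    (sq_eq_sq₀ dist_nonneg dist_nonneg).mp (ha.trans hb.symm)
  have hpos : 0 < 4 * r ^ 2 - dist c d ^ 2 := by
    linarith [pow_lt_pow_left₀ hcd dist_nonneg two_ne_zero, mul_pow 2 r 2]
  have hne : a ≠ midpoint ℝ c d := by
    rw [← dist_ne_zero, ← sq_pos_iff, ha]
    positivity
  rw [angle_eq_arccos_of_dist_eq hab hne, ha]
  congr 2
  field

theorem mixed_tetrahedron_dihedral_angle_opposite_edge_general {A B C D : P}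
    (hAB : dist A B = 2) (hAC : dist A C = √3) (hAD : dist A D = √3)
    (hBC : dist B C = √3) (hBD : dist B D = √3) (hCD : dist C D = √3) :
    ∠ A (midpoint ℝ C D) B = arccos (1 / 9) ∧
      π / 3 < arccos (1 / 9) ∧ arccos (1 / 9) < π / 2 := by
  refine ⟨?_, pi_div_three_lt_arccos.mpr (by norm_num), arccos_lt_pi_div_two.mpr (by norm_num)⟩
  have hlt : dist C D < 2 * √3 := hCD.trans_lt (lt_two_mul_self (by positivity))
  rw [angle_midpoint_eq_arccos hAC hAD hBC hBD hlt, hAB, hCD, sq_sqrt zero_le_three]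
  norm_num

end Tetrahedron

/-- The dihedral angle of the mixed tetrahedron along the degree-6 edge CD
opposite its long edge is arccos(1/9), which lies strictly between π/3 and
π/2. -/
theorem mixed_tetrahedron_dihedral_angle_opposite_edge
    (A B C D : EuclideanSpace ℝ (Fin 3))
    (hAB : dist A B = 2) (hAC : dist A C = Real.sqrt 3)
    (hAD : dist A D = Real.sqrt 3) (hBC : dist B C = Real.sqrt 3)
    (hBD : dist B D = Real.sqrt 3) (hCD : dist C D = Real.sqrt 3) :
    EuclideanGeometry.angle A (midpoint ℝ C D) B = Real.arccos (1 / 9) ∧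
      Real.pi / 3 < Real.arccos (1 / 9) ∧ Real.arccos (1 / 9) < Real.pi / 2 :=
  mixed_tetrahedron_dihedral_angle_opposite_edge_general hAB hAC hAD hBC hBD hCD
end

section
/- Let A, B, C, D be points in EuclideanSpace ℝ (Fin 3) with dist A B = 2 and dist A C = dist A D = dist B C = dist B D = dist C D = √3 (the mixed tetrahedron). Let P be the orthogonal projection of B onto the line through A and C, and let Q be the orthogonal projection of D onto the line through A and C. Then the angle between the vectors B − P and D − Q equals arccos(√6/6), and moreover π/3 < arccos(√6/6) < π/2. (The vectors B − P and D − Q are perpendicular to the edge AC, so this angle is the dihedral angle of the mixed tetrahedron along the degree-6 edge AC adjacent to its long edge; this angle lies strictly between π/3 and π/2.) -/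
/-! With `A` as origin, the component of a vector `x` orthogonal to `c = C -ᵥ A` is
`x - (⟪x, c⟫ / ‖c‖ ^ 2) • c`, so the dihedral angle along `AC` is determined by the Gram matrix of
the three edge vectors at `A`, and hence, by polarization, by the six edge lengths. In the mixed
tetrahedron the perpendiculars from `B` and `D` to `AC` have squared norms `8 / 3` and `9 / 4` and
inner product `1`, so the cosine of the dihedral angle is `1 / √6`. -/

open AffineMap EuclideanGeometry Real
open scoped RealInnerProductSpace

theorem lt_arccos_iff_lt_cos {θ x : ℝ} (hθ : θ ∈ Set.Ico 0 π) : θ < arccos x ↔ x < cos θ := by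
  rw [arccos, lt_sub_comm, ← sin_pi_div_two_sub]
  exact arcsin_lt_iff_lt_sin' ⟨by linarith [hθ.2], by linarith [hθ.1]⟩

section

variable {V E : Type*} [NormedAddCommGroup V] [InnerProductSpace ℝ V] [MetricSpace E]
  [NormedAddTorsor V E]

theorem inner_vsub_vsub_eq_dist_sq (a x y : E) :
    ⟪x -ᵥ a, y -ᵥ a⟫ = (dist a x ^ 2 + dist a y ^ 2 - dist x y ^ 2) / 2 := by
  rw [real_inner_eq_norm_mul_self_add_norm_mul_self_sub_norm_sub_mul_self_div_two,
    vsub_sub_vsub_cancel_right, dist_comm a x, dist_comm a y]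
  simp only [dist_eq_norm_vsub V, sq]

theorem coe_orthogonalProjection_affineSpan_pair (a c x : E) :
    (orthogonalProjection line[ℝ, a, c] x : E) =
      lineMap a c (⟪x -ᵥ a, c -ᵥ a⟫ / ‖c -ᵥ a‖ ^ 2) := by
  have mem_orthogonal_iff (v : V) : v ∈ line[ℝ, a, c].directionᗮ ↔ ⟪v, c -ᵥ a⟫ = 0 := by
    rw [direction_affineSpan, vectorSpan_pair_rev,
      Submodule.mem_orthogonal_singleton_iff_inner_left]
  rw [coe_orthogonalProjection_eq_iff_mem, mem_orthogonal_iff]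
  refine ⟨lineMap_mem_affineSpan_pair _ a c, ?_⟩
  rw [lineMap_apply, vsub_vadd_eq_vsub_sub, inner_sub_left, real_inner_smul_left,
    real_inner_self_eq_norm_sq, div_mul_cancel_of_imp, sub_self]
  intro hc
  rw [norm_eq_zero.1 (eq_zero_of_pow_eq_zero hc), inner_zero_right]

theorem inner_vsub_orthogonalProjection_affineSpan_pair (a c x y : E) :
    ⟪x -ᵥ (orthogonalProjection line[ℝ, a, c] x : E),
      y -ᵥ (orthogonalProjection line[ℝ, a, c] y : E)⟫ =
      ⟪x -ᵥ a, y -ᵥ a⟫ - ⟪x -ᵥ a, c -ᵥ a⟫ * ⟪y -ᵥ a, c -ᵥ a⟫ / ‖c -ᵥ a‖ ^ 2 := by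
  simp only [coe_orthogonalProjection_affineSpan_pair, lineMap_apply, vsub_vadd_eq_vsub_sub,
    inner_sub_left, inner_sub_right, real_inner_smul_left, real_inner_smul_right,
    real_inner_self_eq_norm_sq, real_inner_comm (y -ᵥ a) (c -ᵥ a)]
  rcases eq_or_ne ‖c -ᵥ a‖ 0 with hc | hc
  · simp [hc]
  · field_simp
    ring

theorem norm_vsub_orthogonalProjection_affineSpan_pair (a c x : E) :
    ‖x -ᵥ (orthogonalProjection line[ℝ, a, c] x : E)‖ =
      √(‖x -ᵥ a‖ ^ 2 - ⟪x -ᵥ a, c -ᵥ a⟫ ^ 2 / ‖c -ᵥ a‖ ^ 2) := by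
  rw [norm_eq_sqrt_real_inner, inner_vsub_orthogonalProjection_affineSpan_pair,
    real_inner_self_eq_norm_sq, ← sq]

/-- The dihedral angle along the edge `ac` between the faces `acb` and `acd`, measured between the
perpendiculars dropped from `b` and `d` to the line `ac`. It takes the junk value `π / 2` if `b` or
`d` lies on that line. -/
noncomputable def dihedralAngle (a c b d : E) : ℝ :=
  InnerProductGeometry.angle (b -ᵥ (orthogonalProjection line[ℝ, a, c] b : E))
    (d -ᵥ (orthogonalProjection line[ℝ, a, c] d : E))

theorem dihedralAngle_eq_arccos (a c b d : E) :
    dihedralAngle a c b d =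
      arccos ((⟪b -ᵥ a, d -ᵥ a⟫ - ⟪b -ᵥ a, c -ᵥ a⟫ * ⟪d -ᵥ a, c -ᵥ a⟫ / ‖c -ᵥ a‖ ^ 2) /
        (√(‖b -ᵥ a‖ ^ 2 - ⟪b -ᵥ a, c -ᵥ a⟫ ^ 2 / ‖c -ᵥ a‖ ^ 2) *
          √(‖d -ᵥ a‖ ^ 2 - ⟪d -ᵥ a, c -ᵥ a⟫ ^ 2 / ‖c -ᵥ a‖ ^ 2))) := by
  rw [dihedralAngle, InnerProductGeometry.angle, inner_vsub_orthogonalProjection_affineSpan_pair,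
    norm_vsub_orthogonalProjection_affineSpan_pair,
    norm_vsub_orthogonalProjection_affineSpan_pair]

theorem mixed_tetrahedron_dihedral_angle_adjacent_edge_general (A B C D : E)
    (hAB : dist A B = 2) (hAC : dist A C = √3) (hAD : dist A D = √3) (hBC : dist B C = √3)
    (hBD : dist B D = √3) (hCD : dist C D = √3) :
    dihedralAngle A C B D = arccos (√6 / 6) ∧
      π / 3 < arccos (√6 / 6) ∧ arccos (√6 / 6) < π / 2 := by
  have sq_sqrt_three : √3 ^ 2 = 3 := sq_sqrt (by norm_num)
  have norm_b : ‖B -ᵥ A‖ = 2 := by rw [← dist_eq_norm_vsub' V, hAB]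
  have norm_c : ‖C -ᵥ A‖ = √3 := by rw [← dist_eq_norm_vsub' V, hAC]
  have norm_d : ‖D -ᵥ A‖ = √3 := by rw [← dist_eq_norm_vsub' V, hAD]
  have inner_b_c : ⟪B -ᵥ A, C -ᵥ A⟫ = 2 := by
    rw [inner_vsub_vsub_eq_dist_sq, hAB, hAC, hBC]; norm_num
  have inner_b_d : ⟪B -ᵥ A, D -ᵥ A⟫ = 2 := by
    rw [inner_vsub_vsub_eq_dist_sq, hAB, hAD, hBD]; norm_num
  have inner_d_c : ⟪D -ᵥ A, C -ᵥ A⟫ = 3 / 2 := by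
    rw [inner_vsub_vsub_eq_dist_sq, hAD, hAC, dist_comm D C, hCD, sq_sqrt_three]; norm_num
  refine ⟨?_, ?_, arccos_lt_pi_div_two.2 (by positivity)⟩
  · rw [dihedralAngle_eq_arccos, norm_b, norm_c, norm_d, inner_b_c, inner_b_d, inner_d_c,
      sq_sqrt_three, ← sqrt_mul (by norm_num), sqrt_div_self]
    norm_num
  · rw [lt_arccos_iff_lt_cos ⟨by positivity, by linarith [pi_pos]⟩, cos_pi_div_three]
    have : √6 < 3 := (sqrt_lt' (by norm_num)).2 (by norm_num)
    linarith

end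

/-- The dihedral angle of the mixed tetrahedron along the degree-6 edge AC
adjacent to its long edge is arccos(√6/6), which lies strictly between π/3 and
π/2.  Here the dihedral angle is measured as the angle between the
perpendiculars from B and D to the line through A and C. -/
theorem mixed_tetrahedron_dihedral_angle_adjacent_edge
    (A B C D : EuclideanSpace ℝ (Fin 3))
    (hAB : dist A B = 2) (hAC : dist A C = Real.sqrt 3)
    (hAD : dist A D = Real.sqrt 3) (hBC : dist B C = Real.sqrt 3)
    (hBD : dist B D = Real.sqrt 3) (hCD : dist C D = Real.sqrt 3)
    (P Q : EuclideanSpace ℝ (Fin 3))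
    (hP : P = EuclideanGeometry.orthogonalProjection
      (affineSpan ℝ {A, C}) B)
    (hQ : Q = EuclideanGeometry.orthogonalProjection
      (affineSpan ℝ {A, C}) D) :
    InnerProductGeometry.angle (B - P) (D - Q) = Real.arccos (Real.sqrt 6 / 6) ∧
      Real.pi / 3 < Real.arccos (Real.sqrt 6 / 6) ∧
      Real.arccos (Real.sqrt 6 / 6) < Real.pi / 2 := by
  subst hP hQ
  exact mixed_tetrahedron_dihedral_angle_adjacent_edge_general A B C D hAB hAC hAD hBC hBD hCD
end

section
/- Let A, B, C, D be points in EuclideanSpace ℝ (Fin 3) with dist A B = 2, dist C D = 2, and dist A C = dist A D = dist B C = dist B D = √3 (the Coxeter tetrahedron). Let P be the orthogonal projection of B onto the line through A and C, and let Q be the orthogonal projection of D onto the line through A and C. Then the angle between the vectors B − P and D − Q equals π/3. (The vectors B − P and D − Q are perpendicular to the edge AC, so this angle is the dihedral angle of the Coxeter tetrahedron along the length-√3 edge AC, i.e. along a degree-6 edge: it equals exactly π/3.) -/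
/-! The components `b` and `d` of `AB` and `AD` orthogonal to the edge vector `AC` have inner
product `⟪AB, AD⟫ - ⟪AB, AC⟫ ⟪AC, AD⟫ / ‖AC‖²`, and similarly for their squared norms. By the law
of cosines all these quantities are determined by the edge lengths: `‖b‖² = ‖d‖² = 8 / 3` and
`⟪b, d⟫ = 4 / 3`, so the cosine of the dihedral angle is `1 / 2`. -/

open EuclideanGeometry (orthogonalProjection)
open InnerProductGeometry (angle)
open Real
open scoped InnerProductSpace

section Projection

variable {𝕜 V Pt : Type*} [RCLike 𝕜] [NormedAddCommGroup V] [InnerProductSpace 𝕜 V]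

theorem inner_starProjection_orthogonal_singleton (w u v : V) :
    ⟪(𝕜 ∙ w)ᗮ.starProjection u, (𝕜 ∙ w)ᗮ.starProjection v⟫_𝕜 =
      ⟪u, v⟫_𝕜 - ⟪u, w⟫_𝕜 * ⟪w, v⟫_𝕜 / (‖w‖ ^ 2 : ℝ) :=
  calc
    ⟪(𝕜 ∙ w)ᗮ.starProjection u, (𝕜 ∙ w)ᗮ.starProjection v⟫_𝕜
      = ⟪u, (𝕜 ∙ w)ᗮ.starProjection v⟫_𝕜 := by
        rw [Submodule.inner_starProjection_left_eq_right,
          Submodule.starProjection_eq_self_iff.2 (Submodule.starProjection_apply_mem _ v)]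
    _ = ⟪u, v⟫_𝕜 - ⟪u, w⟫_𝕜 * ⟪w, v⟫_𝕜 / (‖w‖ ^ 2 : ℝ) := by
        rw [Submodule.starProjection_orthogonal_val, Submodule.starProjection_singleton,
          inner_sub_right, inner_smul_right]
        ring

variable [MetricSpace Pt] [NormedAddTorsor V Pt]

theorem vsub_orthogonalProjection_eq_starProjection_orthogonal {s : AffineSubspace 𝕜 Pt}
    [Nonempty s] [s.direction.HasOrthogonalProjection] {A : Pt} (hA : A ∈ s) (X : Pt) :
    X -ᵥ (orthogonalProjection s X : Pt) = s.directionᗮ.starProjection (X -ᵥ A) := by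
  rw [EuclideanGeometry.orthogonalProjection_apply_mem s hA, vsub_vadd_eq_vsub_sub,
    Submodule.starProjection_orthogonal_val, Submodule.starProjection_apply]

theorem inner_vsub_orthogonalProjection_line (A C X Y : Pt) :
    ⟪X -ᵥ (orthogonalProjection line[𝕜, A, C] X : Pt),
        Y -ᵥ (orthogonalProjection line[𝕜, A, C] Y : Pt)⟫_𝕜 =
      ⟪X -ᵥ A, Y -ᵥ A⟫_𝕜 - ⟪X -ᵥ A, C -ᵥ A⟫_𝕜 * ⟪C -ᵥ A, Y -ᵥ A⟫_𝕜 / (‖C -ᵥ A‖ ^ 2 : ℝ) := by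
  have hA : A ∈ line[𝕜, A, C] := left_mem_affineSpan_pair 𝕜 A C
  simp only [vsub_orthogonalProjection_eq_starProjection_orthogonal hA, direction_affineSpan,
    vectorSpan_pair_rev, inner_starProjection_orthogonal_singleton]

end Projection

section Angle

variable {V Pt : Type*} [NormedAddCommGroup V] [InnerProductSpace ℝ V]

theorem angle_eq_of_inner_eq_norm_mul_norm_mul_cos {x y : V} {θ : ℝ} (hx : x ≠ 0) (hy : y ≠ 0)
    (hθ : θ ∈ Set.Icc 0 π) (h : ⟪x, y⟫_ℝ = ‖x‖ * ‖y‖ * cos θ) : angle x y = θ := by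
  have hxy : ‖x‖ * ‖y‖ ≠ 0 := mul_ne_zero (norm_ne_zero_iff.2 hx) (norm_ne_zero_iff.2 hy)
  rw [angle, h, mul_div_cancel_left₀ _ hxy, arccos_cos hθ.1 hθ.2]

variable [MetricSpace Pt] [NormedAddTorsor V Pt]

theorem inner_vsub_vsub_eq_dist_sq_add_dist_sq_sub_dist_sq_div_two (A X Y : Pt) :
    ⟪X -ᵥ A, Y -ᵥ A⟫_ℝ = (dist A X ^ 2 + dist A Y ^ 2 - dist X Y ^ 2) / 2 := by
  rw [real_inner_eq_norm_mul_self_add_norm_mul_self_sub_norm_sub_mul_self_div_two,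
    vsub_sub_vsub_cancel_right, ← dist_eq_norm_vsub, ← dist_eq_norm_vsub, ← dist_eq_norm_vsub,
    dist_comm X A, dist_comm Y A]
  ring

theorem inner_vsub_orthogonalProjection_line_eq_dist (A C X Y : Pt) :
    ⟪X -ᵥ (orthogonalProjection line[ℝ, A, C] X : Pt),
        Y -ᵥ (orthogonalProjection line[ℝ, A, C] Y : Pt)⟫_ℝ =
      (dist A X ^ 2 + dist A Y ^ 2 - dist X Y ^ 2) / 2 -
        (dist A X ^ 2 + dist A C ^ 2 - dist X C ^ 2) / 2 *
          ((dist A C ^ 2 + dist A Y ^ 2 - dist C Y ^ 2) / 2) / dist A C ^ 2 := by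
  rw [inner_vsub_orthogonalProjection_line, dist_eq_norm_vsub' V A C]
  simp only [inner_vsub_vsub_eq_dist_sq_add_dist_sq_sub_dist_sq_div_two,
    ← dist_eq_norm_vsub' V A C, RCLike.ofReal_real_eq_id, id]

theorem coxeter_tetrahedron_dihedral_angle_short_edge_general (A B C D : Pt)
    (hAB : dist A B = 2) (hCD : dist C D = 2)
    (hAC : dist A C = √3) (hAD : dist A D = √3) (hBC : dist B C = √3) (hBD : dist B D = √3) :
    angle (B -ᵥ (orthogonalProjection line[ℝ, A, C] B : Pt))
      (D -ᵥ (orthogonalProjection line[ℝ, A, C] D : Pt)) = π / 3 := by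
  set b := B -ᵥ (orthogonalProjection line[ℝ, A, C] B : Pt)
  set d := D -ᵥ (orthogonalProjection line[ℝ, A, C] D : Pt)
  have inner_b_d : ⟪b, d⟫_ℝ = 4 / 3 := by
    rw [inner_vsub_orthogonalProjection_line_eq_dist, hAB, hAC, hAD, hBD, hBC, hCD,
      sq_sqrt zero_le_three]
    norm_num
  have norm_b : ‖b‖ = √(8 / 3) := by
    rw [norm_eq_sqrt_real_inner, inner_vsub_orthogonalProjection_line_eq_dist, dist_comm C B,
      hAB, hAC, hBC, dist_self, sq_sqrt zero_le_three]
    norm_num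
  have norm_d : ‖d‖ = √(8 / 3) := by
    rw [norm_eq_sqrt_real_inner, inner_vsub_orthogonalProjection_line_eq_dist, dist_comm D C,
      hAC, hAD, hCD, dist_self, sq_sqrt zero_le_three]
    norm_num
  have hb : b ≠ 0 := norm_pos_iff.1 (by rw [norm_b]; positivity)
  have hd : d ≠ 0 := norm_pos_iff.1 (by rw [norm_d]; positivity)
  have hθ : π / 3 ∈ Set.Icc 0 π := ⟨by positivity, by linarith [pi_pos]⟩
  apply angle_eq_of_inner_eq_norm_mul_norm_mul_cos hb hd hθ
  rw [inner_b_d, norm_b, norm_d, mul_self_sqrt (by norm_num), cos_pi_div_three]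
  norm_num

end Angle

/-- The dihedral angle of the Coxeter tetrahedron along the length-√3 edge AC
(a degree-6 edge) is exactly π/3.  Here the dihedral angle is measured as the
angle between the perpendiculars from B and D to the line through A and C. -/
theorem coxeter_tetrahedron_dihedral_angle_short_edge
    (A B C D : EuclideanSpace ℝ (Fin 3))
    (hAB : dist A B = 2) (hCD : dist C D = 2)
    (hAC : dist A C = Real.sqrt 3) (hAD : dist A D = Real.sqrt 3)
    (hBC : dist B C = Real.sqrt 3) (hBD : dist B D = Real.sqrt 3)
    (P Q : EuclideanSpace ℝ (Fin 3))
    (hP : P = EuclideanGeometry.orthogonalProjection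
      (affineSpan ℝ {A, C}) B)
    (hQ : Q = EuclideanGeometry.orthogonalProjection
      (affineSpan ℝ {A, C}) D) :
    InnerProductGeometry.angle (B - P) (D - Q) = Real.pi / 3 := by
  rw [hP, hQ]
  exact coxeter_tetrahedron_dihedral_angle_short_edge_general A B C D hAB hCD hAC hAD hBC hBD
end
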